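/- For any list T_1, …, T_t of subsets of 𝒦 with compact form of the element rearrangement T*_{t,1}, …, T*_{t,t}, the set function b⁺(T) = I(V_T; Y | V_{T^c}, Q) satisfies ∑_{i=1}^{t} I(V_{T_i}; Y | V_{T_i^c}, Q) ≥ ∑_{i=1}^{t} I(V_{T*_{t,i}}; Y | V_{(T*_{t,i})^c}, Q). -/

import Mathlib

open scoped Classical

/-- Probability that the random variable `X` (on the finite sample space `Ω` with
probability mass function `p`) takes the value `a`. -/
noncomputable def prob {Ω : Type} [Fintype Ω] (p : Ω → ℝ) {α : Type} (X : Ω → α)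
    (a : α) : ℝ :=
  ∑ ω : Ω, if X ω = a then p ω else 0

/-- Shannon entropy (base 2) of the random variable `X`, with the convention
`0 · log 0 = 0`. -/
noncomputable def ent {Ω : Type} [Fintype Ω] (p : Ω → ℝ) {α : Type} [Fintype α]
    (X : Ω → α) : ℝ :=
  -∑ a : α, prob p X a * Real.logb 2 (prob p X a)

/-- Conditional mutual information `I(X; Y | Z) = H(X,Z) + H(Y,Z) - H(X,Y,Z) - H(Z)`. -/
noncomputable def condMI {Ω : Type} [Fintype Ω] (p : Ω → ℝ) {α β γ : Type}
    [Fintype α] [Fintype β] [Fintype γ] (X : Ω → α) (Y : Ω → β) (Z : Ω → γ) : ℝ :=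
  ent p (fun ω => (X ω, Z ω)) + ent p (fun ω => (Y ω, Z ω))
    - ent p (fun ω => (X ω, Y ω, Z ω)) - ent p Z

/-- The tuple-valued random variable `V_J = (V_j)_{j ∈ J}`. -/
def VJ {Ω : Type} {K : ℕ} {α : Fin K → Type} (V : (i : Fin K) → Ω → α i)
    (J : Finset (Fin K)) : Ω → ((j : J) → α j) :=
  fun ω j => V j ω

/-- `V_1, …, V_K` are mutually conditionally independent given `Q`:
`P(V_1 = v_1, …, V_K = v_K, Q = q) · P(Q = q)^(K-1) = ∏ i, P(V_i = v_i, Q = q)`. -/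
def CondIndep {Ω : Type} [Fintype Ω] {𝒬 : Type} {K : ℕ} {α : Fin K → Type}
    (p : Ω → ℝ) (Q : Ω → 𝒬) (V : (i : Fin K) → Ω → α i) : Prop :=
  ∀ (q : 𝒬) (v : (i : Fin K) → α i),
    prob p (fun ω => ((fun i => V i ω : (i : Fin K) → α i), Q ω)) (v, q)
        * (prob p Q q) ^ (K - 1)
      = ∏ i : Fin K, prob p (fun ω => (V i ω, Q ω)) (v i, q)

/-- The `i`-th set of the compact form of the element rearrangement of the list
`T 0, …, T (t-1)` of subsets of `Fin K`. -/
def compactForm {K t : ℕ} (T : Fin t → Finset (Fin K)) (i : ℕ) : Finset (Fin K) :=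
  (Finset.powersetCard i (Finset.univ : Finset (Fin t))).sup fun S => S.inf T

/-! For a submodular `f`, the sum `f ∅ + ∑ i ∈ S, (f {i} - f ∅)` is an upper bound for `f S`, and
equality at the whole set forces equality everywhere, so that `f` is modular. Conditional
independence gives this equality for `J ↦ H(V_J, Q)`, and `J ↦ H(V_J, Y, Q)` is submodular.
Up to a constant, `b⁺(S)` is the latter minus the former, both at `Sᶜ`; hence `b⁺` is submodular.

Appending a set `A` to a list with compact form `R_1 ⊇ R_2 ⊇ ⋯` turns it into `R_{i+1} ∪ (A ∩ R_i)`,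
and the submodular inequalities for the pairs `R_{i+1}`, `A ∩ R_i` telescope because
`R_{i+1} ∩ (A ∩ R_i) = A ∩ R_{i+1}`. -/

section Submodular

/-- A submodular function on a lattice; on `Finset ι` this is the usual notion of a submodular set
function. -/
def Submodular {L M : Type*} [Lattice L] [Add M] [LE M] (f : L → M) : Prop :=
  ∀ a b, f (a ⊔ b) + f (a ⊓ b) ≤ f a + f b

variable {ι M : Type*} [DecidableEq ι] [AddCommGroup M] [PartialOrder M] [IsOrderedAddMonoid M]
  {f : Finset ι → M}

lemma Submodular.le_add_sum_singleton (hf : Submodular f) (S : Finset ι) :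
    f S ≤ f ∅ + ∑ i ∈ S, (f {i} - f ∅) := by
  induction S using Finset.induction_on with
  | empty => simp
  | insert a S ha ih =>
    have h : f (insert a S) + f ∅ ≤ f {a} + f S := by
      simpa [← Finset.insert_eq, ha] using hf {a} S
    calc f (insert a S) ≤ f {a} + f S - f ∅ := le_sub_iff_add_le.2 h
      _ ≤ f {a} + (f ∅ + ∑ i ∈ S, (f {i} - f ∅)) - f ∅ := by gcongr
      _ = f ∅ + ∑ i ∈ insert a S, (f {i} - f ∅) := by rw [Finset.sum_insert ha]; abel

variable [Fintype ι]

lemma Submodular.eq_add_sum_singleton (hf : Submodular f)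
    (huniv : f Finset.univ = f ∅ + ∑ i, (f {i} - f ∅)) (S : Finset ι) :
    f S = f ∅ + ∑ i ∈ S, (f {i} - f ∅) := by
  refine (hf.le_add_sum_singleton S).antisymm ?_
  have hcompl := hf.le_add_sum_singleton Sᶜ
  have hsplit : f Finset.univ + f ∅ ≤ f S + f Sᶜ := by simpa using hf S Sᶜ
  rw [huniv, ← Finset.sum_add_sum_compl S] at hsplit
  calc f ∅ + ∑ i ∈ S, (f {i} - f ∅)
      = f ∅ + (∑ i ∈ S, (f {i} - f ∅) + ∑ i ∈ Sᶜ, (f {i} - f ∅)) + f ∅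
          - (f ∅ + ∑ i ∈ Sᶜ, (f {i} - f ∅)) := by abel
    _ ≤ f S + f Sᶜ - f Sᶜ := sub_le_sub hsplit hcompl
    _ = f S := add_sub_cancel_right _ _

lemma Submodular.map_union_add_map_inter (hf : Submodular f)
    (huniv : f Finset.univ = f ∅ + ∑ i, (f {i} - f ∅)) (A B : Finset ι) :
    f (A ∪ B) + f (A ∩ B) = f A + f B := by
  have hsum := Finset.sum_union_inter (s₁ := A) (s₂ := B) (f := fun i => f {i} - f ∅)
  rw [hf.eq_add_sum_singleton huniv (A ∪ B), hf.eq_add_sum_singleton huniv (A ∩ B),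
    hf.eq_add_sum_singleton huniv A, hf.eq_add_sum_singleton huniv B]
  grind

end Submodular

section Rearrangement

/-- The compact form of the element rearrangement of a family `T` indexed by `s`, in any bounded
lattice: the `i`-th term is the join of the meets of `i` members with distinct indices.
`compactForm T i` is definitionally `rearrangement Finset.univ T i`. -/
def rearrangement {ι L : Type*} [Lattice L] [BoundedOrder L] (s : Finset ι) (T : ι → L) (i : ℕ) :
    L :=
  (s.powersetCard i).sup fun S => S.inf T

variable {ι L : Type*}

section Lattice

variable [Lattice L] [BoundedOrder L] (s : Finset ι) (T : ι → L)

lemma rearrangement_zero : rearrangement s T 0 = ⊤ := by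
  simp [rearrangement]

lemma rearrangement_card_add_one : rearrangement s T (s.card + 1) = ⊥ := by
  simp [rearrangement]

lemma rearrangement_antitone : Antitone (rearrangement s T) := by
  intro i j hij
  refine Finset.sup_le fun S hS => ?_
  obtain ⟨hSs, hcard⟩ := Finset.mem_powersetCard.1 hS
  obtain ⟨S', hS', hcard'⟩ := Finset.exists_subset_card_eq (hij.trans_eq hcard.symm)
  exact (Finset.inf_mono hS').trans <| Finset.le_sup (f := fun S => S.inf T) <|
    Finset.mem_powersetCard.2 ⟨hS'.trans hSs, hcard'⟩

end Lattice

variable [DistribLattice L] [BoundedOrder L] {s : Finset ι} {a : ι}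

lemma rearrangement_insert_add_one [DecidableEq ι] (ha : a ∉ s) (T : ι → L) (i : ℕ) :
    rearrangement (insert a s) T (i + 1) =
      rearrangement s T (i + 1) ⊔ (T a ⊓ rearrangement s T i) := by
  simp only [rearrangement, Finset.powersetCard_succ_insert ha, Finset.sup_union, Finset.sup_image,
    Function.comp_def, Finset.inf_insert, Finset.sup_inf_distrib_left, Nat.succ_eq_add_one]

variable {M : Type*} [AddCommGroup M] [PartialOrder M] [IsOrderedAddMonoid M] {f : L → M}

lemma Submodular.sum_rearrangement_insert_le [DecidableEq ι] (hf : Submodular f) (ha : a ∉ s)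
    (T : ι → L) (m : ℕ) :
    ∑ i ∈ Finset.Icc 1 m, f (rearrangement (insert a s) T i) + f (T a ⊓ rearrangement s T m)
      ≤ ∑ i ∈ Finset.Icc 1 m, f (rearrangement s T i) + f (T a) := by
  induction m with
  | zero => simp [rearrangement_zero]
  | succ m ih =>
    have hmeet : rearrangement s T (m + 1) ⊓ (T a ⊓ rearrangement s T m) =
        T a ⊓ rearrangement s T (m + 1) := by
      rw [inf_left_comm, inf_eq_left.2 (rearrangement_antitone s T m.le_succ)]
    have hstep := hf (rearrangement s T (m + 1)) (T a ⊓ rearrangement s T m)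
    rw [hmeet, ← rearrangement_insert_add_one ha] at hstep
    rw [Finset.sum_Icc_succ_top (by lia), Finset.sum_Icc_succ_top (by lia), add_assoc]
    calc _ ≤ ∑ i ∈ Finset.Icc 1 m, f (rearrangement (insert a s) T i)
          + (f (rearrangement s T (m + 1)) + f (T a ⊓ rearrangement s T m)) := by gcongr
      _ = ∑ i ∈ Finset.Icc 1 m, f (rearrangement (insert a s) T i)
          + f (T a ⊓ rearrangement s T m) + f (rearrangement s T (m + 1)) := by abel
      _ ≤ ∑ i ∈ Finset.Icc 1 m, f (rearrangement s T i) + f (T a)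
          + f (rearrangement s T (m + 1)) := by gcongr
      _ = _ := add_right_comm _ _ _

theorem Submodular.sum_rearrangement_le (hf : Submodular f) (s : Finset ι) (T : ι → L) :
    ∑ i ∈ Finset.Icc 1 s.card, f (rearrangement s T i) ≤ ∑ i ∈ s, f (T i) := by
  classical
  induction s using Finset.induction_on with
  | empty => simp
  | insert a s ha ih =>
    have hlast : rearrangement (insert a s) T (s.card + 1) = T a ⊓ rearrangement s T s.card := by
      rw [rearrangement_insert_add_one ha, rearrangement_card_add_one, bot_sup_eq]
    rw [Finset.card_insert_of_notMem ha, Finset.sum_insert ha, Finset.sum_Icc_succ_top (by lia),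
      hlast, add_comm (f (T a))]
    exact (hf.sum_rearrangement_insert_le ha T s.card).trans (by gcongr)

end Rearrangement

section Entropy

lemma sum_mul_logb_nonpos {ι : Type*} {s : Finset ι} {w r : ι → ℝ} {b : ℝ} (hb : 1 < b)
    (hw : ∀ i ∈ s, 0 ≤ w i) (hr : ∀ i ∈ s, 0 < w i → 0 < r i)
    (hsum : ∑ i ∈ s, w i * r i ≤ ∑ i ∈ s, w i) : ∑ i ∈ s, w i * Real.logb b (r i) ≤ 0 := by
  have hterm : ∀ i ∈ s, w i * Real.log (r i) ≤ w i * r i - w i := by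
    intro i hi
    rcases (hw i hi).eq_or_lt with h | h
    · simp [← h]
    · rw [← mul_sub_one]
      exact mul_le_mul_of_nonneg_left (Real.log_le_sub_one_of_pos (hr i hi h)) h.le
  have hlog : ∑ i ∈ s, w i * Real.log (r i) ≤ 0 := by
    refine (Finset.sum_le_sum hterm).trans ?_
    rw [Finset.sum_sub_distrib]
    exact sub_nonpos.2 hsum
  simp only [Real.logb, ← mul_div_assoc, ← Finset.sum_div]
  exact div_nonpos_of_nonpos_of_nonneg hlog (Real.log_pos hb).le

variable {Ω : Type} [Fintype Ω] {p : Ω → ℝ} {α β γ : Type}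

lemma prob_nonneg (hp : ∀ ω, 0 ≤ p ω) (X : Ω → α) (a : α) : 0 ≤ prob p X a :=
  Finset.sum_nonneg fun ω _ => by split_ifs <;> simp [hp ω]

lemma prob_apply_pos (hp : ∀ ω, 0 ≤ p ω) (X : Ω → α) {ω : Ω} (hω : 0 < p ω) :
    0 < prob p X (X ω) :=
  Finset.sum_pos' (fun ω' _ => by split_ifs <;> simp [hp ω'])
    ⟨ω, Finset.mem_univ ω, by simpa using hω⟩

lemma sum_prob_mul [Fintype α] (p : Ω → ℝ) (X : Ω → α) (g : α → ℝ) :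
    ∑ a, prob p X a * g a = ∑ ω, p ω * g (X ω) := by
  simp only [prob, Finset.sum_mul]
  rw [Finset.sum_comm]
  simp [ite_mul]

lemma sum_prob [Fintype α] (p : Ω → ℝ) (X : Ω → α) : ∑ a, prob p X a = ∑ ω, p ω := by
  simpa using sum_prob_mul p X fun _ => 1

lemma sum_prob_prodMk [Fintype α] (p : Ω → ℝ) (X : Ω → α) (Z : Ω → γ) (c : γ) :
    ∑ a, prob p (fun ω => (X ω, Z ω)) (a, c) = prob p Z c := by
  simp only [prob, Prod.mk.injEq, ite_and]
  rw [Finset.sum_comm]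
  simp

lemma ent_eq_neg_sum [Fintype α] (p : Ω → ℝ) (X : Ω → α) :
    ent p X = -∑ ω, p ω * Real.logb 2 (prob p X (X ω)) := by
  rw [ent, sum_prob_mul p X fun a => Real.logb 2 (prob p X a)]

lemma ent_congr [Fintype α] [Fintype β] (p : Ω → ℝ) {X : Ω → α} {Y : Ω → β}
    (h : ∀ ω ω', X ω = X ω' ↔ Y ω = Y ω') : ent p X = ent p Y := by
  simp only [ent_eq_neg_sum, prob, h]

/-- The likelihood ratio `P(x, z) P(y, z) / (P(x, y, z) P(z))` at the values taken at `ω`, whose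
logarithm has expectation `-I(X; Y | Z)`. -/
noncomputable def condIndepRatio (p : Ω → ℝ) (X : Ω → α) (Y : Ω → β) (Z : Ω → γ) (ω : Ω) : ℝ :=
  prob p (fun ω => (X ω, Z ω)) (X ω, Z ω) * prob p (fun ω => (Y ω, Z ω)) (Y ω, Z ω)
    / (prob p (fun ω => (X ω, Y ω, Z ω)) (X ω, Y ω, Z ω) * prob p Z (Z ω))

lemma condIndepRatio_pos (hp : ∀ ω, 0 ≤ p ω) (X : Ω → α) (Y : Ω → β) (Z : Ω → γ) {ω : Ω}
    (hω : 0 < p ω) : 0 < condIndepRatio p X Y Z ω :=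
  div_pos
    (mul_pos (prob_apply_pos hp (fun ω => (X ω, Z ω)) hω)
      (prob_apply_pos hp (fun ω => (Y ω, Z ω)) hω))
    (mul_pos (prob_apply_pos hp (fun ω => (X ω, Y ω, Z ω)) hω) (prob_apply_pos hp Z hω))

lemma logb_condIndepRatio (hp : ∀ ω, 0 ≤ p ω) (X : Ω → α) (Y : Ω → β) (Z : Ω → γ) (b : ℝ) {ω : Ω}
    (hω : 0 < p ω) :
    Real.logb b (condIndepRatio p X Y Z ω) =
      Real.logb b (prob p (fun ω => (X ω, Z ω)) (X ω, Z ω))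
        + Real.logb b (prob p (fun ω => (Y ω, Z ω)) (Y ω, Z ω))
        - (Real.logb b (prob p (fun ω => (X ω, Y ω, Z ω)) (X ω, Y ω, Z ω))
          + Real.logb b (prob p Z (Z ω))) := by
  have hXZ := (prob_apply_pos hp (fun ω => (X ω, Z ω)) hω).ne'
  have hYZ := (prob_apply_pos hp (fun ω => (Y ω, Z ω)) hω).ne'
  have hXYZ := (prob_apply_pos hp (fun ω => (X ω, Y ω, Z ω)) hω).ne'
  have hZ := (prob_apply_pos hp Z hω).ne'
  rw [condIndepRatio, Real.logb_div (mul_ne_zero hXZ hYZ) (mul_ne_zero hXYZ hZ),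
    Real.logb_mul hXZ hYZ, Real.logb_mul hXYZ hZ]

lemma sum_mul_condIndepRatio_le [Finite α] [Finite β] [Finite γ] (hp : ∀ ω, 0 ≤ p ω) (X : Ω → α)
    (Y : Ω → β) (Z : Ω → γ) : ∑ ω, p ω * condIndepRatio p X Y Z ω ≤ ∑ ω, p ω := by
  have := Fintype.ofFinite α
  have := Fintype.ofFinite β
  have := Fintype.ofFinite γ
  set P := prob p fun ω => (X ω, Y ω, Z ω)
  set PX := prob p fun ω => (X ω, Z ω) with hPX
  set PY := prob p fun ω => (Y ω, Z ω) with hPY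
  set PZ := prob p Z
  calc ∑ ω, p ω * condIndepRatio p X Y Z ω
      = ∑ v, P v * (PX (v.1, v.2.2) * PY (v.2.1, v.2.2) / (P v * PZ v.2.2)) :=
        (sum_prob_mul p (fun ω => (X ω, Y ω, Z ω))
          fun v => PX (v.1, v.2.2) * PY (v.2.1, v.2.2) / (P v * PZ v.2.2)).symm
    _ ≤ ∑ v : α × β × γ, PX (v.1, v.2.2) * PY (v.2.1, v.2.2) / PZ v.2.2 := by
        refine Finset.sum_le_sum fun v _ => ?_
        have hPv : 0 ≤ P v := prob_nonneg hp _ v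
        rcases hPv.eq_or_lt with h | h
        · rw [← h, zero_mul]
          exact div_nonneg (mul_nonneg (prob_nonneg hp _ _) (prob_nonneg hp _ _))
            (prob_nonneg hp _ _)
        · rw [← mul_div_assoc, mul_div_mul_left _ _ h.ne']
    _ = ∑ c, ∑ a, ∑ b, PX (a, c) * PY (b, c) / PZ c := by
        simp only [Fintype.sum_prod_type]
        rw [Finset.sum_comm (s := (Finset.univ : Finset γ))]
        exact Finset.sum_congr rfl fun a _ => Finset.sum_comm
    _ = ∑ c, PZ c * PZ c / PZ c := by
        simp only [← Finset.sum_div, ← Finset.mul_sum, ← Finset.sum_mul, hPX, hPY,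
          sum_prob_prodMk, PZ]
    _ = ∑ ω, p ω := by
        simp only [mul_self_div_self, PZ, sum_prob]

variable [Fintype α] [Fintype β] [Fintype γ]

lemma condMI_eq_neg_sum_logb (hp : ∀ ω, 0 ≤ p ω) (X : Ω → α) (Y : Ω → β) (Z : Ω → γ) :
    condMI p X Y Z = -∑ ω, p ω * Real.logb 2 (condIndepRatio p X Y Z ω) := by
  have hterm : ∀ ω, p ω * Real.logb 2 (condIndepRatio p X Y Z ω) =
      p ω * Real.logb 2 (prob p (fun ω => (X ω, Z ω)) (X ω, Z ω))
        + p ω * Real.logb 2 (prob p (fun ω => (Y ω, Z ω)) (Y ω, Z ω))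
        - (p ω * Real.logb 2 (prob p (fun ω => (X ω, Y ω, Z ω)) (X ω, Y ω, Z ω))
          + p ω * Real.logb 2 (prob p Z (Z ω))) := by
    intro ω
    rcases (hp ω).eq_or_lt with h | h
    · simp [← h]
    · rw [logb_condIndepRatio hp X Y Z 2 h]
      ring
  simp only [hterm, condMI, ent_eq_neg_sum, Finset.sum_sub_distrib, Finset.sum_add_distrib]
  ring

lemma condMI_nonneg (hp : ∀ ω, 0 ≤ p ω) (X : Ω → α) (Y : Ω → β) (Z : Ω → γ) :
    0 ≤ condMI p X Y Z := by
  rw [condMI_eq_neg_sum_logb hp, neg_nonneg]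
  exact sum_mul_logb_nonpos one_lt_two (fun ω _ => hp ω)
    (fun _ _ => condIndepRatio_pos hp X Y Z) (sum_mul_condIndepRatio_le hp X Y Z)

end Entropy

section TupleEntropy

variable {Ω 𝒬 𝒴 δ : Type} {K : ℕ} {α : Fin K → Type} {p : Ω → ℝ}

lemma VJ_eq_iff {V : (i : Fin K) → Ω → α i} {J : Finset (Fin K)} {ω ω' : Ω} :
    VJ V J ω = VJ V J ω' ↔ ∀ j ∈ J, V j ω = V j ω' := by
  simp [VJ, funext_iff]

variable [Fintype Ω]

lemma CondIndep.logb_prob (hp : ∀ ω, 0 ≤ p ω) {Q : Ω → 𝒬} {V : (i : Fin K) → Ω → α i}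
    (hind : CondIndep p Q V) (b : ℝ) {ω : Ω} (hω : 0 < p ω) :
    Real.logb b (prob p (fun ω => ((fun i => V i ω : (i : Fin K) → α i), Q ω))
          (fun i => V i ω, Q ω))
        + (K - 1 : ℕ) * Real.logb b (prob p Q (Q ω))
      = ∑ i, Real.logb b (prob p (fun ω => (V i ω, Q ω)) (V i ω, Q ω)) := by
  have hV := prob_apply_pos hp (fun ω => ((fun i => V i ω : (i : Fin K) → α i), Q ω)) hω
  have hQ := prob_apply_pos hp Q hω
  have hVi := fun i => prob_apply_pos hp (fun ω => (V i ω, Q ω)) hω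
  rw [← Real.logb_prod _ _ fun i _ => (hVi i).ne', ← hind (Q ω) fun i => V i ω,
    Real.logb_mul hV.ne' (pow_pos hQ _).ne', Real.logb_pow]

variable [Fintype 𝒬] [Fintype 𝒴] [Fintype δ] [∀ i, Fintype (α i)]

/-- The set function `J ↦ H(V_J, W)`. -/
noncomputable def jointEnt (p : Ω → ℝ) (V : (i : Fin K) → Ω → α i) (W : Ω → δ)
    (J : Finset (Fin K)) : ℝ :=
  ent p fun ω => (VJ V J ω, W ω)

lemma jointEnt_empty (p : Ω → ℝ) (V : (i : Fin K) → Ω → α i) (W : Ω → δ) :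
    jointEnt p V W ∅ = ent p W :=
  ent_congr p fun ω ω' => by simp [VJ_eq_iff]

lemma jointEnt_singleton (p : Ω → ℝ) (V : (i : Fin K) → Ω → α i) (W : Ω → δ) (i : Fin K) :
    jointEnt p V W {i} = ent p fun ω => (V i ω, W ω) :=
  ent_congr p fun ω ω' => by simp [VJ_eq_iff]

lemma jointEnt_univ (p : Ω → ℝ) (V : (i : Fin K) → Ω → α i) (W : Ω → δ) :
    jointEnt p V W Finset.univ = ent p fun ω => ((fun i => V i ω : (i : Fin K) → α i), W ω) :=
  ent_congr p fun ω ω' => by simp [VJ, funext_iff]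

lemma condMI_VJ (p : Ω → ℝ) (V : (i : Fin K) → Ω → α i) (Y : Ω → 𝒴) (W : Ω → δ)
    (A B : Finset (Fin K)) :
    condMI p (VJ V A) Y (fun ω => (VJ V B ω, W ω)) =
      jointEnt p V W (A ∪ B) + jointEnt p V (fun ω => (Y ω, W ω)) B
        - jointEnt p V (fun ω => (Y ω, W ω)) (A ∪ B) - jointEnt p V W B := by
  have hunion : ent p (fun ω => (VJ V A ω, VJ V B ω, W ω)) = jointEnt p V W (A ∪ B) :=
    ent_congr p fun ω ω' => by simp only [Prod.mk.injEq, VJ_eq_iff, Finset.mem_union]; grind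
  have hswap : ent p (fun ω => (Y ω, VJ V B ω, W ω)) = jointEnt p V (fun ω => (Y ω, W ω)) B :=
    ent_congr p fun ω ω' => by simp only [Prod.mk.injEq]; grind
  have hunion_swap : ent p (fun ω => (VJ V A ω, Y ω, VJ V B ω, W ω)) =
      jointEnt p V (fun ω => (Y ω, W ω)) (A ∪ B) :=
    ent_congr p fun ω ω' => by simp only [Prod.mk.injEq, VJ_eq_iff, Finset.mem_union]; grind
  rw [condMI, hunion, hswap, hunion_swap, ← jointEnt]

lemma submodular_jointEnt (hp : ∀ ω, 0 ≤ p ω) (V : (i : Fin K) → Ω → α i) (W : Ω → δ) :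
    Submodular (jointEnt p V W) := by
  intro A B
  have hnonneg := condMI_nonneg hp (VJ V A) (VJ V B) fun ω => (VJ V (A ∩ B) ω, W ω)
  have hA : ent p (fun ω => (VJ V A ω, VJ V (A ∩ B) ω, W ω)) = jointEnt p V W A :=
    ent_congr p fun ω ω' => by simp only [Prod.mk.injEq, VJ_eq_iff, Finset.mem_inter]; grind
  have hB : ent p (fun ω => (VJ V B ω, VJ V (A ∩ B) ω, W ω)) = jointEnt p V W B :=
    ent_congr p fun ω ω' => by simp only [Prod.mk.injEq, VJ_eq_iff, Finset.mem_inter]; grind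
  have hunion : ent p (fun ω => (VJ V A ω, VJ V B ω, VJ V (A ∩ B) ω, W ω)) =
      jointEnt p V W (A ∪ B) :=
    ent_congr p fun ω ω' => by
      simp only [Prod.mk.injEq, VJ_eq_iff, Finset.mem_inter, Finset.mem_union]; grind
  rw [condMI, hA, hB, hunion, ← jointEnt] at hnonneg
  rw [Finset.sup_eq_union, Finset.inf_eq_inter]
  linarith

lemma CondIndep.jointEnt_univ_eq_add_sum (hp : ∀ ω, 0 ≤ p ω) {Q : Ω → 𝒬}
    {V : (i : Fin K) → Ω → α i} (hind : CondIndep p Q V) :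
    jointEnt p V Q Finset.univ =
      jointEnt p V Q ∅ + ∑ i, (jointEnt p V Q {i} - jointEnt p V Q ∅) := by
  -- The exponent `K - 1` in `CondIndep` is truncated, so `K = 0` is treated apart.
  obtain _ | n := K
  · simp [Finset.univ_eq_empty]
  have hlog : ∀ ω,
      p ω * Real.logb 2 (prob p (fun ω => ((fun i => V i ω : (i : Fin (n + 1)) → α i), Q ω))
          (fun i => V i ω, Q ω)) + n * (p ω * Real.logb 2 (prob p Q (Q ω)))
        = ∑ i, p ω * Real.logb 2 (prob p (fun ω => (V i ω, Q ω)) (V i ω, Q ω)) := by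
    intro ω
    rcases (hp ω).eq_or_lt with h | h
    · simp [← h]
    · rw [← Finset.mul_sum, ← hind.logb_prob hp 2 h, Nat.add_sub_cancel]
      ring
  have hent : (ent p fun ω => ((fun i => V i ω : (i : Fin (n + 1)) → α i), Q ω)) + n * ent p Q =
      ∑ i, ent p fun ω => (V i ω, Q ω) := by
    simp only [ent_eq_neg_sum, Finset.sum_neg_distrib]
    rw [Finset.sum_comm]
    simp only [← hlog, Finset.sum_add_distrib, ← Finset.mul_sum]
    ring
  simp only [jointEnt_univ, jointEnt_empty, jointEnt_singleton, Finset.sum_sub_distrib, ← hent,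
    Finset.sum_const, Finset.card_univ, Fintype.card_fin, nsmul_eq_mul, Nat.cast_add_one]
  ring

lemma CondIndep.submodular_condMI_compl (hp : ∀ ω, 0 ≤ p ω) {Q : Ω → 𝒬}
    {V : (i : Fin K) → Ω → α i} (hind : CondIndep p Q V) (Y : Ω → 𝒴) :
    Submodular fun S => condMI p (VJ V S) Y fun ω => (VJ V Sᶜ ω, Q ω) := by
  intro A B
  have hmodular := (submodular_jointEnt hp V Q).map_union_add_map_inter
    (hind.jointEnt_univ_eq_add_sum hp) Aᶜ Bᶜ
  have hsubmodular := submodular_jointEnt hp V (fun ω => (Y ω, Q ω)) Aᶜ Bᶜ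
  rw [← compl_inf, ← compl_sup] at hsubmodular
  rw [← Finset.compl_inter, ← Finset.compl_union] at hmodular
  simp only [condMI_VJ, Finset.union_compl, Finset.sup_eq_union, Finset.inf_eq_inter]
    at hsubmodular ⊢
  linarith

end TupleEntropy

/-- Lemma 5 (first half): for any list `T_1, …, T_t` of subsets of `𝒦` with compact
form `T*_{t,1}, …, T*_{t,t}`, the set function `b⁺(T) = I(V_T; Y | V_{T^c}, Q)`
satisfies `∑ᵢ b⁺(T_i) ≥ ∑ᵢ b⁺(T*_{t,i})`. -/
theorem bplus_sum_ge_compactForm {Ω 𝒬 𝒴 𝒵 : Type} [Fintype Ω] [Fintype 𝒬] [Fintype 𝒴]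
    [Fintype 𝒵] {K : ℕ} {α : Fin K → Type} [∀ i, Fintype (α i)]
    (p : Ω → ℝ) (hp : ∀ ω, 0 ≤ p ω) (hp1 : ∑ ω : Ω, p ω = 1)
    (Q : Ω → 𝒬) (Y : Ω → 𝒴) (Z : Ω → 𝒵) (V : (i : Fin K) → Ω → α i)
    (hind : CondIndep p Q V) (t : ℕ) (T : Fin t → Finset (Fin K)) :
    ∑ i ∈ Finset.Icc 1 t,
        condMI p (VJ V (compactForm T i)) Y (fun ω => (VJ V (compactForm T i)ᶜ ω, Q ω))
      ≤ ∑ i : Fin t, condMI p (VJ V (T i)) Y (fun ω => (VJ V (T i)ᶜ ω, Q ω)) := by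
  have hsum := (hind.submodular_condMI_compl hp Y).sum_rearrangement_le Finset.univ T
  rw [Finset.card_fin] at hsum
  exact hsum
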